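/- Let μ be a shift-invariant measure on Σ₂ whose support is uniquely ergodic. Then there exists an open set U of pairs of bounded invertible weighted shift operators with positive coefficients such that every pair in U has μ as its unique maximising measure. -/

import Mathlib

open MeasureTheory Filter

noncomputable section

/-- The full two-sided shift space on two symbols. -/
abbrev Sig := ℤ → Bool

/-- The two-sided shift map. -/
def shift : Sig → Sig := fun x i => x (i + 1)

variable {H : Type*} [NormedAddCommGroup H] [InnerProductSpace ℝ H] [CompleteSpace H]

/-- The set of pairs of bounded invertible weighted shift operators with positive
coefficients relative to the orthonormal basis `e` (topologized as a subset of `B(H)²`).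
Invertibility corresponds to the coefficient sequences being bounded away from zero. -/
def WSet (e : HilbertBasis ℤ ℝ H) : Set ((H →L[ℝ] H) × (H →L[ℝ] H)) :=
  {p | ∃ α β : ℤ → ℝ,
    (∃ c : ℝ, 0 < c ∧ ∀ i : ℤ, c ≤ α i) ∧ (∃ c : ℝ, 0 < c ∧ ∀ i : ℤ, c ≤ β i) ∧
    (∀ i : ℤ, p.1 (e i) = α i • e (i + 1)) ∧ (∀ i : ℤ, p.2 (e i) = β i • e (i + 1))}

/-- The product `L_{x_{n-1}} ∘ ⋯ ∘ L_{x_0}` of members of the pair `p = (L₀, L₁)` chosen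
according to the symbols of `x`. -/
def opProd (p : (H →L[ℝ] H) × (H →L[ℝ] H)) (x : Sig) (n : ℕ) : H →L[ℝ] H :=
  (List.ofFn fun i : Fin n => if x (i : ℤ) then p.2 else p.1).reverse.prod

/-- The top Lyapunov exponent of the pair `p` with respect to the shift-invariant
measure `μ`: `Λ(p,μ) = inf_{n ≥ 1} (1/n) ∫ log ‖L_{x_{n-1}} ⋯ L_{x_0}‖ dμ(x)`. -/
def LamOp (p : (H →L[ℝ] H) × (H →L[ℝ] H)) (μ : Measure Sig) : ℝ :=
  ⨅ n : ℕ, ((n : ℝ) + 1)⁻¹ * ∫ x, Real.log ‖opProd p x (n + 1)‖ ∂μ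

/-- The logarithm of the joint spectral radius of the pair `p`:
`log ϱ(p) = inf_{n ≥ 1} (1/n) sup_x log ‖L_{x_{n-1}} ⋯ L_{x_0}‖`. -/
def logSprOp (p : (H →L[ℝ] H) × (H →L[ℝ] H)) : ℝ :=
  ⨅ n : ℕ, ((n : ℝ) + 1)⁻¹ * ⨆ x : Sig, Real.log ‖opProd p x (n + 1)‖

/-- The (topological) support of a Borel measure on `Σ₂`. -/
def suppM (μ : Measure Sig) : Set Sig :=
  {x : Sig | ∀ U : Set Sig, IsOpen U → x ∈ U → 0 < μ U}

lemma continuous_shift : Continuous shift := by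
  unfold shift; fun_prop

lemma shift_iterate (k : ℕ) (x : Sig) (i : ℤ) : (shift^[k] x) i = x (i + k) := by
  induction k generalizing x with
  | zero => simp
  | succ k ih =>
    rw [Function.iterate_succ_apply, ih]
    unfold shift
    congr 1
    push_cast
    ring

def empM (n : ℕ) (y : Sig) : Measure Sig :=
  (n : ENNReal)⁻¹ • ∑ k ∈ Finset.range n, Measure.dirac (shift^[k] y)

lemma empM_prob (n : ℕ) (hn : n ≠ 0) (y : Sig) : IsProbabilityMeasure (empM n y) := by
  constructor
  simp [empM]
  exact ENNReal.inv_mul_cancel (by simpa using hn) (by simp)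

lemma integral_empM (n : ℕ) (y : Sig) (g : Sig → ℝ) (hg : Continuous g) :
    ∫ x, g x ∂(empM n y) = (n : ℝ)⁻¹ * ∑ k ∈ Finset.range n, g (shift^[k] y) := by
  unfold empM
  rw [integral_smul_measure, integral_finsetSum_measure]
  · simp
  · intro i _
    exact integrable_dirac (by simp)

lemma empM_K (n : ℕ) (hn : n ≠ 0) (y : Sig) (K : Set Sig) (hK : MeasurableSet K)
    (hinvK : ∀ x ∈ K, shift x ∈ K) (hy : y ∈ K) : empM n y K = 1 := by
  have h : ∀ k, shift^[k] y ∈ K := by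
    intro k
    induction k with
    | zero => exact hy
    | succ k ih => rw [Function.iterate_succ_apply']; exact hinvK _ ih
  simp [empM, Measure.dirac_apply', hK, h]
  exact ENNReal.inv_mul_cancel (by simpa using hn) (by simp)

lemma unif_erg (K : Set Sig) (hK : IsClosed K) (hinvK : ∀ x ∈ K, shift x ∈ K)
    (μ : Measure Sig)
    (huniq : ∀ ν : Measure Sig, IsProbabilityMeasure ν → ν.map shift = ν →
      ν K = 1 → ν = μ) (g : Sig → ℝ) (hg : Continuous g) (η : ℝ) (hη : 0 < η) :
    ∃ C : ℝ, ∀ (n : ℕ) (y : Sig), y ∈ K →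
      ∑ k ∈ Finset.range n, g (shift^[k] y) ≤ n * ((∫ x, g x ∂μ) + η) + C := by
  by_contra H
  push Not at H
  choose n y hy h using fun N : ℕ => H (N : ℝ)
  obtain ⟨B, hB⟩ := (isCompact_range hg).isBounded.exists_norm_le
  have hB' : ∀ x, |g x| ≤ B := fun x => hB _ ⟨x, rfl⟩
  have hn0 : ∀ N, n N ≠ 0 := by
    intro N h0
    have := h N
    rw [h0] at this
    simp at this
    exact absurd this (not_lt.2 (Nat.cast_nonneg N))
  have hnt : Tendsto (fun N => (n N : ℝ)) atTop atTop := by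
    set D := B + |(∫ x, g x ∂μ) + η| + 1 with hD
    have hB0 : 0 ≤ B := (abs_nonneg _).trans (hB' (fun _ => true))
    have hDpos : 0 < D := by positivity
    have key : ∀ N : ℕ, (N : ℝ) / D ≤ n N := by
      intro N
      rw [div_le_iff₀ hDpos]
      have h1 := h N
      have h2 : ∑ k ∈ Finset.range (n N), g (shift^[k] (y N)) ≤ n N * B := by
        calc _ ≤ ∑ k ∈ Finset.range (n N), B :=
              Finset.sum_le_sum (fun k _ => (le_abs_self _).trans (hB' _))
          _ = _ := by simp
      have h3 := neg_abs_le ((∫ x, g x ∂μ) + η)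
      have h4 : (0 : ℝ) ≤ n N := Nat.cast_nonneg _
      rw [hD]
      nlinarith
    exact tendsto_atTop_mono key (tendsto_natCast_atTop_atTop.atTop_div_const hDpos)
  let P : ℕ → ProbabilityMeasure Sig := fun N => ⟨empM (n N) (y N), empM_prob _ (hn0 N) _⟩
  obtain ⟨ν, -, hν⟩ := isCompact_univ.ultrafilter_le_nhds
    ((hyperfilter ℕ).map P) (by simp)
  have hνt : Tendsto P (hyperfilter ℕ : Filter ℕ) (nhds ν) := hν
  have hle : (hyperfilter ℕ : Filter ℕ) ≤ atTop := by
    rw [← Nat.cofinite_eq_atTop]; exact hyperfilter_le_cofinite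
  have hconv : ∀ f : Sig → ℝ, Continuous f →
      Tendsto (fun N => (n N : ℝ)⁻¹ * ∑ k ∈ Finset.range (n N), f (shift^[k] (y N)))
        (hyperfilter ℕ : Filter ℕ) (nhds (∫ x, f x ∂(ν : Measure Sig))) := by
    intro f hf
    have := (ProbabilityMeasure.tendsto_iff_forall_integral_tendsto.1 hνt)
      (BoundedContinuousFunction.mkOfCompact ⟨f, hf⟩)
    refine this.congr ?_
    intro N
    exact integral_empM _ _ f hf
  have hνK : (ν : Measure Sig) K = 1 := by
    refine le_antisymm prob_le_one ?_
    have h1 := ProbabilityMeasure.limsup_measure_closed_le_of_tendsto hνt hK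
    have h2 : ∀ N, ((P N : Measure Sig)) K = 1 := fun N =>
      empM_K _ (hn0 N) _ K hK.measurableSet hinvK (hy N)
    simpa [h2] using h1
  have hνinv : (ν : Measure Sig).map shift = ν := by
    have : IsProbabilityMeasure ((ν : Measure Sig).map shift) :=
      Measure.isProbabilityMeasure_map continuous_shift.measurable.aemeasurable
    refine ext_of_forall_integral_eq_of_IsFiniteMeasure ?_
    intro f
    rw [integral_map continuous_shift.measurable.aemeasurable
      f.continuous.aestronglyMeasurable]
    have h1 := hconv f f.continuous
    have h2 := hconv (fun x => f (shift x)) (f.continuous.comp continuous_shift)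
    have h3 : Tendsto (fun N => (n N : ℝ)⁻¹ * (f (shift^[n N] (y N)) - f (y N)))
        (hyperfilter ℕ : Filter ℕ) (nhds 0) := by
      have h4 : Tendsto (fun N => (n N : ℝ)⁻¹ * (2 * ‖f‖))
        (hyperfilter ℕ : Filter ℕ) (nhds 0) := by
        have := ((tendsto_inv_atTop_zero.comp hnt).mono_left hle).mul_const (2 * ‖f‖)
        simpa using this
      refine squeeze_zero_norm ?_ h4
      intro N
      rw [norm_mul, Real.norm_of_nonneg (by positivity : (0:ℝ) ≤ (n N : ℝ)⁻¹)]
      gcongr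
      refine (norm_sub_le _ _).trans ?_
      have := f.norm_coe_le_norm (shift^[n N] (y N))
      have := f.norm_coe_le_norm (y N)
      linarith
    have h5 := h2.sub h1
    have h6 := tendsto_nhds_unique (h5.congr (fun N => ?_)) h3
    · linarith
    · rw [← mul_sub, ← Finset.sum_sub_distrib]
      congr 1
      have := Finset.sum_range_sub (fun k => f (shift^[k] (y N))) (n N)
      simp only [Function.iterate_succ_apply'] at this
      simpa using this
  have hνμ := huniq ν inferInstance hνinv hνK
  have h7 := hconv g hg
  rw [hνμ] at h7
  have h8 : (∫ x, g x ∂μ) + η ≤ ∫ x, g x ∂μ := by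
    refine ge_of_tendsto' h7 ?_
    intro N
    have h1 := h N
    have hpos : (0 : ℝ) < n N := by exact_mod_cast Nat.pos_of_ne_zero (hn0 N)
    rw [inv_mul_eq_div, le_div_iff₀ hpos]
    have : (0 : ℝ) ≤ N := Nat.cast_nonneg N
    linarith
  linarith
def blkIdx (z : ℤ) : ℕ := Nat.log 8 z.toNat

def goodP (z : ℤ) : Prop := 0 < z ∧ z < 8 ^ blkIdx z + blkIdx z

def uWord (Y : ℕ → Sig) (z : ℤ) : Bool :=
  Y (Nat.unpair (blkIdx z)).1 (z - 8 ^ blkIdx z)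

lemma blk_le {z : ℤ} (hz : 0 < z) : 8 ^ blkIdx z ≤ z := by
  have h : 8 ^ Nat.log 8 z.toNat ≤ z.toNat := Nat.pow_log_le_self 8 (by omega)
  have h2 : ((8 ^ Nat.log 8 z.toNat : ℕ) : ℤ) ≤ z.toNat := by exact_mod_cast h
  rw [Int.toNat_of_nonneg hz.le] at h2
  unfold blkIdx
  push_cast at h2
  exact h2

lemma blk_mono {z z' : ℤ} (h : z ≤ z') : blkIdx z ≤ blkIdx z' :=
  Nat.log_mono_right (Int.toNat_le_toNat h)

lemma lt_eight_pow (J : ℕ) : (J : ℤ) < 8 ^ J := by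
  exact_mod_cast Nat.lt_pow_self (by norm_num : 1 < 8)

lemma blk_eq {z : ℤ} {J : ℕ} (h1 : 8 ^ J ≤ z) (h2 : z < 8 ^ J + J) : blkIdx z = J := by
  have h3 := lt_eight_pow J
  have h0 : (0 : ℤ) < 8 ^ J := by positivity
  have hz : 0 ≤ z := by omega
  obtain ⟨m, rfl⟩ := Int.eq_ofNat_of_zero_le hz
  unfold blkIdx
  rw [Int.toNat_natCast]
  rw [Nat.log_eq_iff (Or.inr ⟨by norm_num, by rintro rfl; simp at h1; omega⟩)]
  have h4 : (m : ℤ) < 8 ^ (J + 1) := by rw [pow_succ]; omega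
  exact ⟨by exact_mod_cast h1, by exact_mod_cast h4⟩

lemma good_blk {z : ℤ} {J : ℕ} (h1 : 8 ^ J ≤ z) (h2 : z < 8 ^ J + J) : goodP z := by
  have h0 : (0 : ℤ) < 8 ^ J := by positivity
  refine ⟨by omega, ?_⟩
  rw [blk_eq h1 h2]; exact h2

lemma P_one (Y : ℕ → Sig) (q n : ℕ) :
    ∃ i : ℤ, ∀ k : ℕ, k < n → goodP (i + k) ∧ uWord Y (i + k) = Y q k := by
  have hj := Nat.right_le_pair q n
  set J := Nat.pair q n with hJ
  refine ⟨8 ^ J, fun k hk => ?_⟩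
  have h1 : (8 : ℤ) ^ J ≤ 8 ^ J + k := by omega
  have h2 : (8 : ℤ) ^ J + k < 8 ^ J + J := by omega
  refine ⟨good_blk h1 h2, ?_⟩
  unfold uWord
  rw [blk_eq h1 h2, hJ, Nat.unpair_pair]
  congr 1
  ring

lemma iter_mem {K : Set Sig} (hinvK : ∀ x ∈ K, shift x ∈ K) {x : Sig} (hx : x ∈ K) (k : ℕ) :
    shift^[k] x ∈ K := by
  induction k with
  | zero => exact hx
  | succ k ih => rw [Function.iterate_succ_apply']; exact hinvK _ ih

lemma pow_gap (b : ℕ) : (8:ℤ) ^ (b + 1) ≥ 2 * (8 ^ b + b) + (b + 1) := by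
  have := lt_eight_pow b
  have h0 : (1 : ℤ) ≤ 8 ^ b := one_le_pow₀ (by norm_num)
  rw [pow_succ]
  omega

open Classical in
lemma P_two (K : Set Sig) (hinvK : ∀ x ∈ K, shift x ∈ K) (Y : ℕ → Sig) (hY : ∀ q, Y q ∈ K)
    (i : ℤ) (n : ℕ) :
    (2 * ((Finset.range n).filter (fun k : ℕ => goodP (i + k))).card ≤ n) ∨
    ∃ s t : ℕ, s ≤ t ∧ t ≤ n ∧ (∀ k : ℕ, k < n → (goodP (i + k) ↔ s ≤ k ∧ k < t)) ∧
      ∃ y ∈ K, ∀ k : ℕ, s ≤ k → k < t → uWord Y (i + k) = y (k - s) := by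
  set W := (Finset.range n).filter (fun k : ℕ => goodP (i + k)) with hW
  have hWm : ∀ k, k ∈ W ↔ k < n ∧ goodP (i + k) := by intro k; simp [hW]
  rcases W.eq_empty_or_nonempty with h0 | h0
  · left; rw [h0]; simp
  set k2 := W.max' h0 with hk2
  have hk2W : k2 ∈ W := W.max'_mem h0
  have hmax : ∀ k ∈ W, k ≤ k2 := fun k hk => W.le_max' k hk
  clear_value k2
  obtain ⟨hk2n, hg2⟩ := (hWm k2).1 hk2W
  set J := blkIdx (i + k2) with hJ
  have hJ1 : (8 : ℤ) ^ J ≤ i + k2 := blk_le hg2.1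
  have hJ2 : i + k2 < 8 ^ J + J := hg2.2
  have hpos : (0 : ℤ) < 8 ^ J := by positivity
  by_cases hall : ∀ k ∈ W, blkIdx (i + k) = J
  · right
    refine ⟨(max i (8 ^ J) - i).toNat, (min (i + n) (8 ^ J + J) - i).toNat, by omega, by omega,
      ?_, shift^[(max i (8 ^ J) - 8 ^ J).toNat] (Y (Nat.unpair J).1), iter_mem hinvK (hY _) _, ?_⟩
    · intro k hk
      constructor
      · intro hg
        have hb := hall k ((hWm k).2 ⟨hk, hg⟩)
        have h1 := blk_le hg.1
        have h2 := hg.2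
        rw [hb] at h1 h2
        omega
      · rintro ⟨h1, h2⟩
        exact good_blk (J := J) (by omega) (by omega)
    · intro k h1 h2
      rw [shift_iterate]
      unfold uWord
      rw [blk_eq (J := J) (by omega) (by omega)]
      congr 1
      omega
  · left
    push Not at hall
    obtain ⟨k1, hk1W, hne⟩ := hall
    obtain ⟨hk1n, hg1⟩ := (hWm k1).1 hk1W
    have hlt : blkIdx (i + k1) < J :=
      lt_of_le_of_ne (blk_mono (by have := hmax k1 hk1W; omega)) hne
    obtain ⟨b, hb⟩ : ∃ b, J = b + 1 := ⟨J - 1, by omega⟩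
    have hgap := pow_gap b
    have hE : ∀ z, goodP z → blkIdx z < J → z < 8 ^ b + b := by
      intro z hz hzJ
      have h1 := hz.2
      have h2 : (8 : ℤ) ^ blkIdx z ≤ 8 ^ b := pow_le_pow_right₀ (by norm_num) (by omega)
      omega
    have hk1E := hE _ hg1 hlt
    rw [← hb] at hgap
    have hbp : (0 : ℤ) < 8 ^ b := by positivity
    set E : ℤ := 8 ^ b + b with hEd
    set F : ℤ := 8 ^ J with hFd
    clear_value F E
    have c1 : W.card ≤ (Finset.Ico (0 : ℤ) E ∪ Finset.Ico F (F + J)).card := by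
      refine Finset.card_le_card_of_injOn (fun k : ℕ => i + (k : ℤ)) ?_ ?_
      · intro k hk
        obtain ⟨hkn, hgk⟩ := (hWm k).1 hk
        simp only [Finset.coe_union, Finset.coe_Ico, Set.mem_union, Set.mem_Ico]
        by_cases hkJ : blkIdx (i + k) < J
        · left; exact ⟨hgk.1.le, hE _ hgk hkJ⟩
        · right
          have : blkIdx (i + k) = J :=
            le_antisymm (blk_mono (by have := hmax k hk; omega)) (by omega)
          have h1 := blk_le hgk.1
          have h2 := hgk.2
          rw [this, ← hFd] at h1 h2
          exact ⟨h1, h2⟩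
      · intro a _ b _ hab
        simpa using hab
    have c2 : (Finset.Ico E F).card ≤ (Finset.range n \ W).card := by
      refine Finset.card_le_card_of_injOn (fun z : ℤ => (z - i).toNat) ?_ ?_
      · intro z hz
        simp only [Finset.coe_Ico, Set.mem_Ico] at hz
        simp only [Finset.coe_sdiff, Finset.coe_range, Set.mem_sdiff, Set.mem_Iio, Finset.mem_coe]
        refine ⟨by omega, ?_⟩
        intro hm
        obtain ⟨_, hgz⟩ := (hWm _).1 hm
        have he : i + ((z - i).toNat : ℤ) = z := by omega
        rw [he] at hgz
        have hle : blkIdx z ≤ J := blk_mono (by omega)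
        rcases hle.lt_or_eq with h | h
        · have := hE z hgz h; omega
        · have := blk_le hgz.1
          rw [h, ← hFd] at this
          omega
      · intro a ha b hb hab
        simp only [Finset.coe_Ico, Set.mem_Ico] at ha hb
        simp only at hab
        omega
    have c3 := Finset.card_union_le (Finset.Ico (0 : ℤ) E) (Finset.Ico F (F + J))
    have c4 : (Finset.range n \ W).card + W.card = n := by
      rw [Finset.card_sdiff_add_card_eq_card (Finset.filter_subset _ _), Finset.card_range]
    simp only [Int.card_Ico] at c1 c2 c3
    omega
set_option linter.unusedSectionVars false
set_option linter.deprecated false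
lemma opProd_succ (p : (H →L[ℝ] H) × (H →L[ℝ] H)) (x : Sig) (n : ℕ) :
    opProd p x (n + 1) = (if x (n : ℤ) then p.2 else p.1) * opProd p x n := by
  unfold opProd
  rw [List.ofFn_succ', List.concat_eq_append, List.reverse_append]
  simp

lemma opProd_congr (p : (H →L[ℝ] H) × (H →L[ℝ] H)) (x x' : Sig) (n : ℕ)
    (h : ∀ k : ℕ, k < n → x k = x' k) : opProd p x n = opProd p x' n := by
  unfold opProd
  congr 3
  funext i
  rw [h i i.2]

lemma opProd_apply (e : HilbertBasis ℤ ℝ H) (p : (H →L[ℝ] H) × (H →L[ℝ] H)) (w : Bool → ℤ → ℝ)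
    (h1 : ∀ i : ℤ, p.1 (e i) = w false i • e (i + 1))
    (h2 : ∀ i : ℤ, p.2 (e i) = w true i • e (i + 1)) (x : Sig) (n : ℕ) (i : ℤ) :
    opProd p x n (e i) = (∏ k ∈ Finset.range n, w (x k) (i + k)) • e (i + n) := by
  induction n with
  | zero => simp [opProd]
  | succ n ih =>
    rw [opProd_succ, ContinuousLinearMap.mul_apply, ih, map_smul, Finset.prod_range_succ, mul_smul]
    congr 1
    have : i + ((n + 1 : ℕ) : ℤ) = i + n + 1 := by push_cast; ring
    rw [this]
    cases hx : x (n : ℤ)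
    · simp [h1]
    · simp [h2]

lemma dense_basis (e : HilbertBasis ℤ ℝ H) : Dense (Submodule.span ℝ (Set.range e) : Set H) :=
  Submodule.dense_iff_topologicalClosure_eq_top.2 e.dense_span

lemma basis_inner (e : HilbertBasis ℤ ℝ H) (i j : ℤ) :
    inner ℝ (e i) (e j) = if i = j then (1 : ℝ) else 0 :=
  (orthonormal_iff_ite.1 e.orthonormal) i j

lemma opNorm_le_of_weights (e : HilbertBasis ℤ ℝ H) (T : H →L[ℝ] H) (c : ℤ → ℝ) (n : ℤ) (M : ℝ)
    (hT : ∀ i, T (e i) = c i • e (i + n)) (hM : 0 ≤ M) (hc : ∀ i, |c i| ≤ M) : ‖T‖ ≤ M := by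
  have key : ∀ i v, inner ℝ (e (i + n)) (T v) = c i * inner ℝ (e i) v := by
    intro i v
    have : (innerSL ℝ (e (i + n))).comp T = c i • innerSL ℝ (e i) := by
      refine ContinuousLinearMap.ext_on (dense_basis e) ?_
      rintro _ ⟨j, rfl⟩
      by_cases h : i = j
      · simp [hT, h, e.orthonormal.1]
      · simp [hT, basis_inner, h]
    have := congrArg (fun f => f v) this
    simpa using this
  refine ContinuousLinearMap.opNorm_le_bound _ hM ?_
  intro v
  have s1 := e.hasSum_inner_mul_inner (T v) (T v)
  have s2 := (e.hasSum_inner_mul_inner v v).mul_left (M ^ 2)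
  rw [← (Equiv.addRight n).hasSum_iff] at s1
  have h := hasSum_le ?_ s1 s2
  · rw [real_inner_self_eq_norm_sq, real_inner_self_eq_norm_sq, ← mul_pow] at h
    exact le_of_sq_le_sq h (by positivity)
  · intro i
    simp only [Function.comp, Equiv.coe_addRight]
    rw [real_inner_comm (e (i + n)) (T v), key, real_inner_comm (e i) v]
    have : c i ^ 2 ≤ M ^ 2 := sq_le_sq' (by linarith [neg_le_of_abs_le (hc i)])
      (le_of_abs_le (hc i))
    nlinarith [mul_self_nonneg (inner ℝ (e i) v)]

lemma exists_weighted (e : HilbertBasis ℤ ℝ H) (S : Set ℤ) :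
    ∃ T : H →L[ℝ] H, (∀ i ∈ S, T (e i) = (8 : ℝ) • e (i + 1)) ∧
      (∀ i ∉ S, T (e i) = (1 : ℝ) • e (i + 1)) := by
  have ho : Orthonormal ℝ (fun i : ℤ => e (i + 1)) :=
    e.orthonormal.comp (fun i : ℤ => i + 1) (add_left_injective 1)
  have hr : Set.range (fun i : ℤ => e (i + 1)) = Set.range e := by
    ext v
    constructor
    · rintro ⟨i, rfl⟩; exact ⟨i + 1, rfl⟩
    · rintro ⟨i, rfl⟩; exact ⟨i - 1, by simp⟩
  let e' : HilbertBasis ℤ ℝ H := HilbertBasis.mk ho (by rw [hr, e.dense_span])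
  have he' : ∀ i, e' i = e (i + 1) := fun i => by
    simp only [e', HilbertBasis.coe_mk]
  let U : H →L[ℝ] H := ((e.repr.trans e'.repr.symm).toContinuousLinearEquiv : H →L[ℝ] H)
  have hU : ∀ i, U (e i) = e (i + 1) := by
    intro i
    simp only [U]
    have : e'.repr.symm (e.repr (e i)) = e (i + 1) := by
      rw [e.repr_self, e'.repr_symm_single, he']
    exact this
  let V : Submodule ℝ H := (Submodule.span ℝ (e '' S)).topologicalClosure
  have : CompleteSpace V := (Submodule.isClosed_topologicalClosure _).completeSpace_coe
  let P : H →L[ℝ] H := V.starProjection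
  refine ⟨U * (1 + (7 : ℝ) • P), ?_, ?_⟩
  · intro i hi
    have h1 : P (e i) = e i := by
      refine Submodule.starProjection_eq_self_iff.2 ?_
      exact Submodule.le_topologicalClosure _ (Submodule.subset_span ⟨i, hi, rfl⟩)
    simp only [ContinuousLinearMap.mul_apply, ContinuousLinearMap.add_apply,
      ContinuousLinearMap.smul_apply, h1, ContinuousLinearMap.one_apply, map_add, map_smul, hU]
    rw [show (8 : ℝ) = 1 + 7 by norm_num, add_smul, one_smul]
  · intro i hi
    have h1 : P (e i) = 0 := by
      refine (Submodule.starProjection_apply_eq_zero_iff _).2 ?_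
      rw [Submodule.orthogonal_closure, Submodule.mem_orthogonal]
      intro u hu
      induction hu using Submodule.span_induction with
      | mem x hx =>
        obtain ⟨j, hj, rfl⟩ := hx
        rw [basis_inner, if_neg]
        rintro rfl
        exact hi hj
      | zero => simp
      | add x y _ _ hx hy => rw [inner_add_left, hx, hy, add_zero]
      | smul a x _ hx => rw [inner_smul_left, hx, mul_zero]
    simp [h1, hU]
def bSum (φ : Bool → ℤ → ℝ) (x : Sig) (i : ℤ) (n : ℕ) : ℝ :=
  ∑ k ∈ Finset.range n, φ (x k) (i + k)

lemma sum_window (c : ℕ → ℝ) (B : ℝ) (hB : ∀ k, |c k| ≤ B) (n m : ℕ) :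
    m * ∑ k ∈ Finset.range n, c k ≤
      ∑ k ∈ Finset.range n, ∑ j ∈ Finset.range m, c (k + j) + m * (2 * m * B) := by
  have hB0 : 0 ≤ B := (abs_nonneg _).trans (hB 0)
  have habs : ∀ (a l : ℕ), |∑ k ∈ Finset.range l, c (a + k)| ≤ l * B := by
    intro a l
    refine (Finset.abs_sum_le_sum_abs _ _).trans ?_
    refine (Finset.sum_le_sum (fun k _ => hB (a + k))).trans ?_
    simp
  rw [Finset.sum_comm]
  have h : ∀ j ∈ Finset.range m, ∑ k ∈ Finset.range n, c k ≤
      ∑ k ∈ Finset.range n, c (k + j) + 2 * m * B := by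
    intro j hj
    have hjm : (j : ℝ) ≤ m := by exact_mod_cast (Finset.mem_range.1 hj).le
    have e1 := Finset.sum_range_add c j n
    have e2 := Finset.sum_range_add c n j
    rw [add_comm] at e2
    have a1 := abs_le.1 (habs n j)
    have a2 := abs_le.1 (habs 0 j)
    simp only [zero_add] at a2
    have e3 : ∑ k ∈ Finset.range n, c (k + j) = ∑ k ∈ Finset.range n, c (j + k) :=
      Finset.sum_congr rfl (fun k _ => by rw [add_comm])
    have : j * B ≤ m * B := mul_le_mul_of_nonneg_right hjm hB0
    rw [e3]
    linarith
  have := Finset.sum_le_sum h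
  rw [Finset.sum_add_distrib] at this
  simpa using this

lemma bSum_unif (K : Set Sig) (hK : IsClosed K) (hinvK : ∀ x ∈ K, shift x ∈ K)
    (μ : Measure Sig)
    (huniq : ∀ ν : Measure Sig, IsProbabilityMeasure ν → ν.map shift = ν →
      ν K = 1 → ν = μ) (φ : Bool → ℤ → ℝ) (B : ℝ) (hB : ∀ b i, |φ b i| ≤ B)
    (m : ℕ) (hm : 0 < m) (g : Sig → ℝ) (hg : Continuous g)
    (hgφ : ∀ x i, bSum φ x i m ≤ g x) (η : ℝ) (hη : 0 < η) :
    ∃ C : ℝ, ∀ (n : ℕ) (y : Sig) (i : ℤ), y ∈ K →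
      bSum φ y i n ≤ n * ((m : ℝ)⁻¹ * (∫ x, g x ∂μ) + η) + C := by
  have hm' : (0 : ℝ) < m := by exact_mod_cast hm
  obtain ⟨C, hC⟩ := unif_erg K hK hinvK μ huniq g hg (m * η) (by positivity)
  refine ⟨(m : ℝ)⁻¹ * C + 2 * m * B, fun n y i hy => ?_⟩
  have h1 := sum_window (fun k => φ (y k) (i + k)) B (fun k => hB _ _) n m
  have h2 : ∑ k ∈ Finset.range n, ∑ j ∈ Finset.range m, φ (y ((k + j : ℕ) : ℤ)) (i + ((k + j : ℕ) : ℤ))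
      ≤ ∑ k ∈ Finset.range n, g (shift^[k] y) := by
    refine Finset.sum_le_sum (fun k _ => ?_)
    refine le_trans (le_of_eq ?_) (hgφ (shift^[k] y) (i + k))
    unfold bSum
    refine Finset.sum_congr rfl (fun j _ => ?_)
    rw [shift_iterate]
    push_cast
    rw [add_assoc, add_comm (j : ℤ) k]
  have h3 := hC n y hy
  have h4 : m * bSum φ y i n ≤ m * (n * ((m : ℝ)⁻¹ * (∫ x, g x ∂μ) + η) +
      ((m : ℝ)⁻¹ * C + 2 * m * B)) := by
    have e : m * (n * ((m : ℝ)⁻¹ * (∫ x, g x ∂μ) + η) + ((m : ℝ)⁻¹ * C + 2 * m * B))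
      = n * ((∫ x, g x ∂μ) + m * η) + C + m * (2 * m * B) := by
      field_simp
      ring
    rw [e]
    unfold bSum
    linarith
  exact le_of_mul_le_mul_left h4 hm'

lemma log_a : Real.log 2 + 1 / 4 ≤ Real.log 7 := by
  have h : Real.exp (1 / 4) ≤ 7 / 2 := by
    have h1 : Real.exp (1 / 4) ≤ Real.exp 1 := Real.exp_le_exp.2 (by norm_num)
    have := Real.exp_one_lt_d9
    linarith
  have h2 : 1 / 4 ≤ Real.log (7 / 2) := (Real.le_log_iff_exp_le (by norm_num)).2 h
  rw [Real.log_div (by norm_num) (by norm_num)] at h2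
  linarith

lemma log_b : (Real.log 2 + Real.log 9) / 2 + 1 / 4 ≤ Real.log 7 := by
  have h : Real.exp (1 / 2) ≤ 49 / 18 := by
    have h1 : Real.exp (1 / 2) ≤ Real.exp 1 := Real.exp_le_exp.2 (by norm_num)
    have := Real.exp_one_lt_d9
    linarith
  have h2 : 1 / 2 ≤ Real.log (49 / 18) := (Real.le_log_iff_exp_le (by norm_num)).2 h
  rw [Real.log_div (by norm_num) (by norm_num), show (49 : ℝ) = 7 * 7 by norm_num,
    show (18 : ℝ) = 2 * 9 by norm_num, Real.log_mul (by norm_num) (by norm_num),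
    Real.log_mul (by norm_num) (by norm_num)] at h2
  linarith

open Classical in
def badSet (Y : ℕ → Sig) (x : Sig) (i : ℤ) (n : ℕ) : Finset ℕ :=
  (Finset.range n).filter (fun k : ℕ => ¬ (goodP (i + k) ∧ x k = uWord Y (i + k)))

lemma mem_badSet (Y : ℕ → Sig) (x : Sig) (i : ℤ) (n k : ℕ) :
    k ∈ badSet Y x i n ↔ k < n ∧ ¬ (goodP (i + k) ∧ x k = uWord Y (i + k)) := by
  simp [badSet]

open Classical in
lemma bSum_le (K : Set Sig) (hinvK : ∀ x ∈ K, shift x ∈ K) (Y : ℕ → Sig) (hY : ∀ q, Y q ∈ K)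
    (φ : Bool → ℤ → ℝ)
    (hgood : ∀ z, goodP z → Real.log 7 ≤ φ (uWord Y z) z)
    (hmax : ∀ b z, φ b z ≤ Real.log 9)
    (hbad : ∀ b z, ¬ (goodP z ∧ b = uWord Y z) → φ b z ≤ Real.log 2)
    (Λ C : ℝ) (hΛ : Real.log 7 ≤ Λ)
    (hK : ∀ (n : ℕ) (y : Sig) (i : ℤ), y ∈ K → bSum φ y i n ≤ n * Λ + C)
    (x : Sig) (i : ℤ) (n : ℕ) :
    bSum φ x i n ≤ n * Λ + C - (badSet Y x i n).card / 4 := by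
  have la := log_a
  have lb := log_b
  set D := badSet Y x i n with hD
  have hDm : ∀ k, k ∈ D ↔ k < n ∧ ¬ (goodP (i + k) ∧ x k = uWord Y (i + k)) :=
    mem_badSet Y x i n
  have hDsub : D ⊆ Finset.range n := fun k hk => Finset.mem_range.2 ((hDm k).1 hk).1
  have hcardD : ((D.card : ℕ) : ℝ) = ∑ k ∈ Finset.range n, (if k ∈ D then (1 : ℝ) else 0) := by
    rw [Finset.sum_ite_mem, Finset.inter_eq_right.2 hDsub]
    simp
  have hC : 0 ≤ C := by
    have := hK 0 (Y 0) 0 (hY 0)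
    simpa [bSum] using this
  rcases P_two K hinvK Y hY i n with h | ⟨s, t, hst, htn, hgd, y, hyK, hy⟩
  ·
    have hc : (n : ℝ) ≤ 2 * D.card := by
      have h2 : (Finset.range n).filter (fun k : ℕ => ¬ goodP (i + k)) ⊆ D := by
        intro k hk
        simp only [Finset.mem_filter, Finset.mem_range] at hk
        exact (hDm k).2 ⟨hk.1, fun h => hk.2 h.1⟩
      have h3 := Finset.card_le_card h2
      have h4 := Finset.card_filter_add_card_filter_not (s := Finset.range n)
        (fun k : ℕ => goodP (i + k))
      rw [Finset.card_range] at h4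
      have : n ≤ 2 * D.card := by omega
      exact_mod_cast this
    have hDn : (D.card : ℝ) ≤ n := by
      have := Finset.card_le_card hDsub
      rw [Finset.card_range] at this
      exact_mod_cast this
    have h5 : bSum φ x i n ≤ n * Real.log 9 - D.card * (Real.log 9 - Real.log 2) := by
      have : bSum φ x i n ≤ ∑ k ∈ Finset.range n,
          (Real.log 9 - (if k ∈ D then (1 : ℝ) else 0) * (Real.log 9 - Real.log 2)) := by
        refine Finset.sum_le_sum (fun k hk => ?_)
        by_cases hkD : k ∈ D
        · have := hbad (x k) (i + k) ((hDm k).1 hkD).2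
          simp only [hkD, if_true]
          linarith
        · simp only [hkD, if_false]
          have := hmax (x k) (i + k)
          linarith
      rw [Finset.sum_sub_distrib, ← Finset.sum_mul, ← hcardD] at this
      simpa using this
    have l92 : 0 ≤ Real.log 9 - Real.log 2 :=
      sub_nonneg.2 (Real.log_le_log (by norm_num) (by norm_num))
    have hn0 : (0 : ℝ) ≤ n := Nat.cast_nonneg n
    nlinarith
  · have h5 : bSum φ x i n ≤ ∑ k ∈ Finset.range n,
          ((if k ∈ Finset.Ico s t then φ (uWord Y (i + k)) (i + k) else Λ)
            - (if k ∈ D then (1 : ℝ) else 0) * (1 / 4)) := by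
      refine Finset.sum_le_sum (fun k hk => ?_)
      have hkn := Finset.mem_range.1 hk
      have hg := hgd k hkn
      rw [← Finset.mem_Ico] at hg
      by_cases hkD : k ∈ D
      · have h6 := hbad (x k) (i + k) ((hDm k).1 hkD).2
        by_cases hkg : goodP (i + k)
        · simp only [hkD, hg.1 hkg, if_true]
          have := hgood _ hkg
          linarith
        · rw [if_pos hkD, if_neg (fun h => hkg (hg.2 h))]
          linarith
      · have h6 : goodP (i + k) ∧ x k = uWord Y (i + k) := by
          by_contra h
          exact hkD ((hDm k).2 ⟨hkn, h⟩)
        simp only [hkD, hg.1 h6.1, if_true, if_false, h6.2]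
        linarith
    rw [Finset.sum_sub_distrib, ← Finset.sum_mul, ← hcardD, Finset.sum_ite] at h5
    have e1 : (Finset.range n).filter (fun k => k ∈ Finset.Ico s t) = Finset.Ico s t := by
      ext k
      simp only [Finset.mem_filter, Finset.mem_range, Finset.mem_Ico]
      omega
    have e2 : (((Finset.range n).filter (fun k => k ∉ Finset.Ico s t)).card : ℝ)
        = n - ((t - s : ℕ) : ℝ) := by
      have h4 := Finset.card_filter_add_card_filter_not (s := Finset.range n)
        (fun k : ℕ => k ∈ Finset.Ico s t)
      rw [e1, Finset.card_range, Nat.card_Ico] at h4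
      rw [eq_sub_iff_add_eq, add_comm]
      exact_mod_cast h4
    have e3 : ∑ k ∈ Finset.Ico s t, φ (uWord Y (i + k)) (i + k) = bSum φ y (i + s) (t - s) := by
      rw [Finset.sum_Ico_eq_sum_range]
      refine Finset.sum_congr rfl (fun k hk => ?_)
      have hk' := Finset.mem_range.1 hk
      have := hy (s + k) (by omega) (by omega)
      rw [this]
      push_cast
      rw [add_assoc, add_sub_cancel_left]
    rw [e1, e3, Finset.sum_const, nsmul_eq_mul, e2] at h5
    have h7 := hK (t - s) y (i + s) hyK
    linarith

def offLang (K : Set Sig) (r : ℕ) : Set Sig := {x | ¬ ∃ y ∈ K, ∀ k : ℕ, k < r → y k = x k}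

open Classical in
lemma count_le (K : Set Sig) (hinvK : ∀ x ∈ K, shift x ∈ K) (Y : ℕ → Sig) (hY : ∀ q, Y q ∈ K)
    (x : Sig) (i : ℤ) (n r : ℕ) (hr : 0 < r) :
    ((Finset.range n).filter (fun k => shift^[k] x ∈ offLang K r)).card
      ≤ r * (badSet Y x i n).card + r := by
  set D := badSet Y x i n with hD
  have hsub : (Finset.range n).filter (fun k => shift^[k] x ∈ offLang K r) ⊆
      (D.biUnion fun d => Finset.Ico (d + 1 - r) (d + 1)) ∪ Finset.Ico (n - r) n := by
    intro k hk
    simp only [Finset.mem_filter, Finset.mem_range] at hk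
    obtain ⟨hkn, hko⟩ := hk
    simp only [Finset.mem_union, Finset.mem_biUnion, Finset.mem_Ico]
    by_contra hcon
    push Not at hcon
    obtain ⟨hc1, hc2⟩ := hcon
    have hkr : k + r ≤ n := by
      by_contra h
      have := hc2 (by omega)
      omega
    have hall : ∀ l : ℕ, l < r → goodP (i + k + l) ∧ x (k + l) = uWord Y (i + k + l) := by
      intro l hl
      by_contra h
      have hm : k + l ∈ D := by
        refine (mem_badSet Y x i n (k + l)).2 ⟨by omega, ?_⟩
        push_cast
        rw [← add_assoc]
        exact h
      have := hc1 (k + l) hm (by omega)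
      omega
    apply hko
    rcases P_two K hinvK Y hY (i + k) r with h | ⟨s, t, hst, htn, hgd, y, hyK, hy⟩
    · rw [Finset.filter_true_of_mem (fun l hl => (hall l (Finset.mem_range.1 hl)).1),
        Finset.card_range] at h
      omega
    · have h1 := (hgd 0 hr).1 (by simpa using (hall 0 hr).1)
      have h2 := (hgd (r - 1) (by omega)).1 (hall (r - 1) (by omega)).1
      refine ⟨y, hyK, fun l hl => ?_⟩
      have h3 := hy l (by omega) (by omega)
      rw [shift_iterate, add_comm, (hall l hl).2, h3]
      congr 1
      omega
  refine (Finset.card_le_card hsub).trans ((Finset.card_union_le _ _).trans ?_)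
  refine add_le_add (Finset.card_biUnion_le.trans ?_) (by simp; omega)
  refine (Finset.sum_le_sum (g := fun _ => r) (fun d _ => by simp; omega)).trans ?_
  rw [Finset.sum_const, smul_eq_mul, mul_comm]
lemma isClosed_suppM (μ : Measure Sig) : IsClosed (suppM μ) := by
  rw [← isOpen_compl_iff, isOpen_iff_forall_mem_open]
  intro x hx
  simp only [suppM, Set.mem_compl_iff, Set.mem_setOf_eq, not_forall] at hx
  obtain ⟨U, hU, hxU, h0⟩ := hx
  exact ⟨U, fun z hz hzs => h0 (hzs U hU hz), hU, hxU⟩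

lemma suppM_inv (μ : Measure Sig) (hinv : μ.map shift = μ) : ∀ x ∈ suppM μ, shift x ∈ suppM μ := by
  intro x hx U hU hxU
  rw [← hinv, Measure.map_apply continuous_shift.measurable hU.measurableSet]
  exact hx _ (hU.preimage continuous_shift) hxU

lemma continuous_restr (n : ℕ) : Continuous (fun (x : Sig) (k : Fin n) => x (k : ℤ)) := by
  fun_prop

lemma continuous_of_fin (n : ℕ) (f : Sig → ℝ)
    (hf : ∀ x x' : Sig, (∀ k : ℕ, k < n → x k = x' k) → f x = f x') : Continuous f := by
  let ext : (Fin n → Bool) → Sig := fun v i =>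
    if h : i.toNat < n then v ⟨i.toNat, h⟩ else false
  have : f = (fun v => f (ext v)) ∘ (fun (x : Sig) (k : Fin n) => x (k : ℤ)) := by
    funext x
    refine hf _ _ (fun k hk => ?_)
    simp [ext, hk]
  rw [this]
  exact continuous_of_discreteTopology.comp (continuous_restr n)

lemma measurable_offLang (K : Set Sig) (r : ℕ) : MeasurableSet (offLang K r) := by
  have : offLang K r = (fun (x : Sig) (k : Fin r) => x (k : ℤ)) ⁻¹'
      {v | ¬ ∃ y ∈ K, ∀ k : Fin r, y (k : ℤ) = v k} := by
    ext x
    simp only [offLang, Set.mem_setOf_eq, Set.mem_preimage]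
    constructor
    · rintro h ⟨y, hy, h2⟩
      exact h ⟨y, hy, fun k hk => h2 ⟨k, hk⟩⟩
    · rintro h ⟨y, hy, h2⟩
      exact h ⟨y, hy, fun k => h2 k k.2⟩
  rw [this]
  exact ((isOpen_discrete _).preimage (continuous_restr r)).measurableSet

lemma exists_off (K : Set Sig) (hK : IsClosed K) (hinvK : ∀ x ∈ K, shift x ∈ K)
    (ν : Measure Sig) [IsProbabilityMeasure ν] (hinv : ν.map shift = ν) (hne : ν K ≠ 1) :
    ∃ r : ℕ, 0 < r ∧ 0 < ν.real (offLang K r) := by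
  by_contra hcon
  push Not at hcon
  have h0 : ∀ r : ℕ, 0 < r → ν (offLang K r) = 0 := by
    intro r hr
    have := le_antisymm (hcon r hr) measureReal_nonneg
    exact (measureReal_eq_zero_iff).1 this
  have hmp : MeasurePreserving shift ν ν := ⟨continuous_shift.measurable, hinv⟩
  let τ : ℕ → Sig → Sig := fun m x i => x (i - m)
  have hτ : ∀ m, Continuous (τ m) := fun m => by simp only [τ]; fun_prop
  have hτs : ∀ m x, τ m (shift^[m] x) = x := by
    intro m x
    funext i
    simp only [τ]
    rw [shift_iterate]
    simp
  have h1 : ∀ m : ℕ, ν (τ m ⁻¹' offLang K (2 * m + 1)) = 0 := by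
    intro m
    have hm := (measurable_offLang K (2 * m + 1)).preimage (hτ m).measurable
    rw [← (hmp.iterate m).measure_preimage hm.nullMeasurableSet]
    have : shift^[m] ⁻¹' (τ m ⁻¹' offLang K (2 * m + 1)) = offLang K (2 * m + 1) := by
      ext x
      simp only [Set.mem_preimage, hτs]
    rw [this]
    exact h0 _ (by omega)
  have hsub : Kᶜ ⊆ ⋃ m : ℕ, τ m ⁻¹' offLang K (2 * m + 1) := by
    intro x hx
    by_contra hn
    simp only [Set.mem_iUnion, Set.mem_preimage, not_exists] at hn
    have hopen := hK.isOpen_compl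
    obtain ⟨I, u, hu, hIu⟩ := isOpen_pi_iff.1 hopen x hx
    obtain ⟨m, hm⟩ : ∃ m : ℕ, ∀ j ∈ I, j.natAbs ≤ m :=
      ⟨I.sup Int.natAbs, fun j hj => Finset.le_sup (f := Int.natAbs) hj⟩
    have := hn m
    simp only [offLang, Set.mem_setOf_eq, not_not] at this
    obtain ⟨y, hy, hyx⟩ := this
    refine hIu (?_ : shift^[m] y ∈ _) (iter_mem hinvK hy m)
    intro j hj
    have hjm := hm j hj
    rw [shift_iterate]
    have h2 := hyx (j + m).toNat (by omega)
    have h3 : (((j + m).toNat : ℕ) : ℤ) = j + m := by omega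
    rw [h3] at h2
    rw [h2]
    simp only [τ, add_sub_cancel_right]
    exact (hu j hj).2
  have h2 : ν Kᶜ = 0 := measure_mono_null hsub (measure_iUnion_null h1)
  exact hne ((prob_compl_eq_zero_iff hK.measurableSet).1 h2)

lemma exists_seq (K : Set Sig) (hne : K.Nonempty) :
    ∃ Y : ℕ → Sig, (∀ q, Y q ∈ K) ∧
      ∀ y ∈ K, ∀ n : ℕ, ∃ q, ∀ k : ℕ, k < n → Y q k = y k := by
  have : Nonempty K := hne.to_subtype
  obtain ⟨Y, hY⟩ := TopologicalSpace.exists_dense_seq K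
  refine ⟨fun q => Y q, fun q => (Y q).2, fun y hy n => ?_⟩
  have hc : Continuous (fun (x : K) (k : Fin n) => (x : Sig) (k : ℤ)) :=
    (continuous_restr n).comp continuous_subtype_val
  obtain ⟨q, hq⟩ := hY.exists_mem_open
    ((isOpen_discrete {fun k : Fin n => y (k : ℤ)}).preimage hc) ⟨⟨y, hy⟩, rfl⟩
  refine ⟨q, fun k hk => ?_⟩
  exact congrFun hq ⟨k, hk⟩

open Classical in
lemma integral_count (ν : Measure Sig) [IsProbabilityMeasure ν] (hinv : ν.map shift = ν)
    (A : Set Sig) (hA : MeasurableSet A) (n : ℕ) :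
    Integrable (fun x => (((Finset.range n).filter (fun k => shift^[k] x ∈ A)).card : ℝ)) ν ∧
    ∫ x, (((Finset.range n).filter (fun k => shift^[k] x ∈ A)).card : ℝ) ∂ν = n * ν.real A := by
  have hmp : MeasurePreserving shift ν ν := ⟨continuous_shift.measurable, hinv⟩
  have e : (fun x => (((Finset.range n).filter (fun k => shift^[k] x ∈ A)).card : ℝ))
      = fun x => ∑ k ∈ Finset.range n, (shift^[k] ⁻¹' A).indicator (fun _ => (1 : ℝ)) x := by
    funext x
    rw [Finset.card_filter]
    push_cast
    refine Finset.sum_congr rfl (fun k _ => ?_)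
    simp [Set.indicator_apply]
  have hm : ∀ k : ℕ, MeasurableSet (shift^[k] ⁻¹' A) := fun k =>
    (hmp.iterate k).measurable hA
  have hi : ∀ k ∈ Finset.range n,
      Integrable ((shift^[k] ⁻¹' A).indicator (fun _ => (1 : ℝ))) ν := fun k _ =>
    (integrable_const 1).indicator (hm k)
  rw [e]
  refine ⟨integrable_finsetSum _ hi, ?_⟩
  rw [integral_finsetSum _ hi]
  have : ∀ k ∈ Finset.range n,
      ∫ x, (shift^[k] ⁻¹' A).indicator (fun _ => (1 : ℝ)) x ∂ν = ν.real A := by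
    intro k _
    rw [integral_indicator_const _ (hm k), smul_eq_mul, mul_one]
    exact (hmp.iterate k).measureReal_preimage hA.nullMeasurableSet
  rw [Finset.sum_congr rfl this]
  simp

lemma le_of_err {a b C : ℝ} (h : ∀ n : ℕ, a ≤ b + ((n : ℝ) + 1)⁻¹ * C) : a ≤ b := by
  have h1 : Tendsto (fun n : ℕ => b + ((n : ℝ) + 1)⁻¹ * C) atTop (nhds (b + 0 * C)) := by
    refine tendsto_const_nhds.add (Tendsto.mul_const C ?_)
    simpa using tendsto_one_div_add_atTop_nhds_zero_nat (𝕜 := ℝ)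
  have := ge_of_tendsto' h1 h
  simpa using this

open Classical in
lemma abstract_main (K : Set Sig) (hK : IsClosed K) (hinvK : ∀ x ∈ K, shift x ∈ K)
    (μ : Measure Sig) (hprob : IsProbabilityMeasure μ) (hμK : μ K = 1)
    (huniq : ∀ ν : Measure Sig, IsProbabilityMeasure ν → ν.map shift = ν →
      ν K = 1 → ν = μ)
    (Y : ℕ → Sig) (hY : ∀ q, Y q ∈ K)
    (hYd : ∀ y ∈ K, ∀ n : ℕ, ∃ q, ∀ k : ℕ, k < n → Y q k = y k)
    (φ : Bool → ℤ → ℝ) (B : ℝ) (hB : ∀ b i, |φ b i| ≤ B)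
    (hgood : ∀ z, goodP z → Real.log 7 ≤ φ (uWord Y z) z)
    (hmax : ∀ b z, φ b z ≤ Real.log 9)
    (hbad : ∀ b z, ¬ (goodP z ∧ b = uWord Y z) → φ b z ≤ Real.log 2)
    (f : ℕ → Sig → ℝ) (hfc : ∀ n, Continuous (f n))
    (hf1 : ∀ n x i, bSum φ x i n ≤ f n x)
    (hf2 : ∀ n x M, (∀ i, bSum φ x i n ≤ M) → f n x ≤ M)
    (ν : Measure Sig) (hν : IsProbabilityMeasure ν) (hinv : ν.map shift = ν) :
    ((⨅ n : ℕ, ((n : ℝ) + 1)⁻¹ * ∫ x, f (n + 1) x ∂ν)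
      = ⨅ n : ℕ, ((n : ℝ) + 1)⁻¹ * ⨆ x : Sig, f (n + 1) x) ↔ ν = μ := by
  have hfi : ∀ (ρ : Measure Sig) [IsProbabilityMeasure ρ] n, Integrable (f n) ρ := by
    intro ρ _ n
    exact (hfc n).integrable_of_hasCompactSupport (HasCompactSupport.of_compactSpace _)
  have hbS : ∀ n x i, |bSum φ x i n| ≤ n * B := by
    intro n x i
    refine (Finset.abs_sum_le_sum_abs _ _).trans ?_
    refine (Finset.sum_le_sum (fun k _ => hB _ _)).trans ?_
    simp
  have hflow : ∀ n x, -(n * B) ≤ f n x := fun n x =>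
    (abs_le.1 (hbS n x 0)).1.trans (hf1 n x 0)
  have hfup : ∀ n x, f n x ≤ n * B := fun n x =>
    hf2 n x _ (fun i => (abs_le.1 (hbS n x i)).2)
  have hbdd : ∀ n, BddAbove (Set.range (f n)) := fun n =>
    ⟨n * B, by rintro _ ⟨x, rfl⟩; exact hfup n x⟩
  have hintlow : ∀ (ρ : Measure Sig) [IsProbabilityMeasure ρ] (a : ℝ) n,
      (∀ᵐ x ∂ρ, a ≤ f n x) → a ≤ ∫ x, f n x ∂ρ := by
    intro ρ _ a n h
    have := integral_mono_ae (integrable_const a) (hfi ρ n) h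
    simpa using this
  have hbb : ∀ (ρ : Measure Sig) [IsProbabilityMeasure ρ],
      BddBelow (Set.range fun n : ℕ => ((n : ℝ) + 1)⁻¹ * ∫ x, f (n + 1) x ∂ρ) := by
    intro ρ _
    refine ⟨-B, ?_⟩
    rintro _ ⟨n, rfl⟩
    have h1 := hintlow ρ (-((n + 1 : ℕ) * B)) (n + 1) (Eventually.of_forall (hflow (n + 1)))
    have hp : (0 : ℝ) < (n : ℝ) + 1 := by positivity
    show -B ≤ ((n : ℝ) + 1)⁻¹ * ∫ x, f (n + 1) x ∂ρ
    rw [inv_mul_eq_div, le_div_iff₀ hp]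
    push_cast at h1
    linarith
  have hintsup : ∀ (ρ : Measure Sig) [IsProbabilityMeasure ρ] n,
      ∫ x, f n x ∂ρ ≤ ⨆ x, f n x := by
    intro ρ _ n
    have := integral_mono (hfi ρ n) (integrable_const (⨆ x, f n x))
      (fun x => le_ciSup (hbdd n) x)
    simpa using this
  have hLamle : ∀ (ρ : Measure Sig) [IsProbabilityMeasure ρ],
      (⨅ n : ℕ, ((n : ℝ) + 1)⁻¹ * ∫ x, f (n + 1) x ∂ρ)
      ≤ ⨅ n : ℕ, ((n : ℝ) + 1)⁻¹ * ⨆ x : Sig, f (n + 1) x := by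
    intro ρ _
    refine ciInf_mono (hbb ρ) (fun n => ?_)
    exact mul_le_mul_of_nonneg_left (hintsup ρ _) (by positivity)
  have hK7 : ∀ n, ∀ y ∈ K, n * Real.log 7 ≤ f n y := by
    intro n y hy
    obtain ⟨q, hq⟩ := hYd y hy n
    obtain ⟨i, hi⟩ := P_one Y q n
    refine le_trans ?_ (hf1 n y i)
    have : ∑ k ∈ Finset.range n, Real.log 7 ≤ bSum φ y i n := by
      refine Finset.sum_le_sum (fun k hk => ?_)
      have hk' := Finset.mem_range.1 hk
      obtain ⟨g1, g2⟩ := hi k hk'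
      rw [← hq k hk', ← g2]
      exact hgood _ g1
    simpa using this
  have hae : ∀ᵐ x ∂μ, x ∈ K := by
    have : K ∈ ae μ := mem_ae_iff.2 ((prob_compl_eq_zero_iff hK.measurableSet).2 hμK)
    exact this
  have key : ∀ (m : ℕ) (η : ℝ), 0 < η → ∃ C : ℝ, ∀ (r : ℕ), 0 < r → ∀ n x,
      f n x ≤ n * ((((m : ℝ) + 1)⁻¹ * ∫ x, f (m + 1) x ∂μ) + η) + C -
        ((Finset.range n).filter (fun k => shift^[k] x ∈ offLang K r)).card / (4 * r) := by
    intro m η hη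
    obtain ⟨C, hC⟩ := bSum_unif K hK hinvK μ huniq φ B hB (m + 1) (Nat.succ_pos m) (f (m + 1))
      (hfc _) (hf1 _) η hη
    refine ⟨C + 1 / 4, fun r hr n x => hf2 n x _ (fun i => ?_)⟩
    push_cast at hC
    have hΛ : Real.log 7 ≤ (((m : ℝ) + 1)⁻¹ * ∫ x, f (m + 1) x ∂μ) + η := by
      have h1 := hintlow μ ((m + 1 : ℕ) * Real.log 7) (m + 1)
        (hae.mono (fun x hx => hK7 (m + 1) x hx))
      have hp : (0 : ℝ) < (m : ℝ) + 1 := by positivity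
      have : Real.log 7 ≤ ((m : ℝ) + 1)⁻¹ * ∫ x, f (m + 1) x ∂μ := by
        rw [inv_mul_eq_div, le_div_iff₀ hp]
        push_cast at h1
        linarith
      linarith
    have h1 := bSum_le K hinvK Y hY φ hgood hmax hbad _ C hΛ hC x i n
    have h2 := count_le K hinvK Y hY x i n r hr
    have h3 : (((Finset.range n).filter (fun k => shift^[k] x ∈ offLang K r)).card : ℝ)
      ≤ r * (badSet Y x i n).card + r := by exact_mod_cast h2
    have hr' : (0 : ℝ) < r := by exact_mod_cast hr
    have h4 : (((Finset.range n).filter (fun k => shift^[k] x ∈ offLang K r)).card : ℝ) / (4 * r)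
        ≤ (badSet Y x i n).card / 4 + 1 / 4 := by
      rw [div_le_iff₀ (by positivity)]
      linarith
    linarith
  have hμmax : (⨅ n : ℕ, ((n : ℝ) + 1)⁻¹ * ⨆ x : Sig, f (n + 1) x)
      ≤ ⨅ n : ℕ, ((n : ℝ) + 1)⁻¹ * ∫ x, f (n + 1) x ∂μ := by
    refine le_ciInf (fun m => ?_)
    refine le_of_forall_pos_le_add (fun η hη => ?_)
    obtain ⟨C, hC⟩ := key m η hη
    refine le_of_err (C := C) (fun n => ?_)
    have hbs : BddBelow (Set.range fun n : ℕ => ((n : ℝ) + 1)⁻¹ * ⨆ x : Sig, f (n + 1) x) := by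
      obtain ⟨b, hb⟩ := hbb μ
      refine ⟨b, ?_⟩
      rintro _ ⟨n, rfl⟩
      refine (hb ⟨n, rfl⟩).trans ?_
      exact mul_le_mul_of_nonneg_left (hintsup μ _) (by positivity)
    refine (ciInf_le hbs n).trans ?_
    have hp : (0 : ℝ) < (n : ℝ) + 1 := by positivity
    have hs : (⨆ x : Sig, f (n + 1) x) ≤
        ((n : ℝ) + 1) * ((((m : ℝ) + 1)⁻¹ * ∫ x, f (m + 1) x ∂μ) + η) + C := by
      refine ciSup_le (fun x => ?_)
      have h1 := hC 1 one_pos (n + 1) x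
      have h2 : (0 : ℝ) ≤ ((Finset.range (n + 1)).filter
        (fun k => shift^[k] x ∈ offLang K 1)).card / (4 * (1 : ℕ)) := by positivity
      push_cast at h1 h2
      linarith
    calc _ ≤ ((n : ℝ) + 1)⁻¹ *
          (((n : ℝ) + 1) * ((((m : ℝ) + 1)⁻¹ * ∫ x, f (m + 1) x ∂μ) + η) + C) :=
          mul_le_mul_of_nonneg_left hs (by positivity)
      _ = _ := by rw [mul_add, inv_mul_cancel_left₀ hp.ne']
  constructor
  · intro heq
    by_contra hne
    have hνK : ν K ≠ 1 := fun h => hne (huniq ν hν hinv h)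
    obtain ⟨r, hr, hδ⟩ := exists_off K hK hinvK ν hinv hνK
    set δ := ν.real (offLang K r) with hδd
    have hr' : (0 : ℝ) < r := by exact_mod_cast hr
    have hup : (⨅ n : ℕ, ((n : ℝ) + 1)⁻¹ * ∫ x, f (n + 1) x ∂ν) + δ / (4 * r)
        ≤ ⨅ n : ℕ, ((n : ℝ) + 1)⁻¹ * ∫ x, f (n + 1) x ∂μ := by
      refine le_ciInf (fun m => ?_)
      refine le_of_forall_pos_le_add (fun η hη => ?_)
      obtain ⟨C, hC⟩ := key m η hη
      refine le_of_err (C := C) (fun n => ?_)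
      have hp : (0 : ℝ) < (n : ℝ) + 1 := by positivity
      obtain ⟨hci, hce⟩ := integral_count ν hinv (offLang K r) (measurable_offLang K r) (n + 1)
      have h1 := integral_mono (hfi ν (n + 1))
        ((integrable_const _).sub (hci.div_const (4 * (r : ℝ)))) (fun x => hC r hr (n + 1) x)
      simp only [Pi.sub_apply] at h1
      rw [integral_sub (integrable_const _) (hci.div_const (4 * (r : ℝ))), integral_div, hce] at h1
      simp only [integral_const, probReal_univ, one_smul] at h1
      have h2 := ciInf_le (hbb ν) n
      have h3 := mul_le_mul_of_nonneg_left h1 (inv_nonneg.2 hp.le)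
      push_cast at h3
      have e : ((n : ℝ) + 1)⁻¹ * ((((n : ℝ) + 1) *
          ((((m : ℝ) + 1)⁻¹ * ∫ x, f (m + 1) x ∂μ) + η) + C) - ((n : ℝ) + 1) * δ / (4 * r))
          = (((m : ℝ) + 1)⁻¹ * ∫ x, f (m + 1) x ∂μ) + η + ((n : ℝ) + 1)⁻¹ * C - δ / (4 * r) := by
        rw [mul_sub, mul_add, inv_mul_cancel_left₀ hp.ne', mul_div_assoc, inv_mul_cancel_left₀ hp.ne']
      rw [e] at h3
      linarith
    have h4 := hLamle μ
    have h5 : 0 < δ / (4 * r) := by positivity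
    linarith
  · rintro rfl
    exact le_antisymm (hLamle ν) hμmax
lemma norm_opProd_ge (e : HilbertBasis ℤ ℝ H) (p : (H →L[ℝ] H) × (H →L[ℝ] H)) (w : Bool → ℤ → ℝ)
    (h1 : ∀ i : ℤ, p.1 (e i) = w false i • e (i + 1))
    (h2 : ∀ i : ℤ, p.2 (e i) = w true i • e (i + 1)) (hw : ∀ b i, 0 < w b i)
    (x : Sig) (n : ℕ) (i : ℤ) :
    Real.exp (bSum (fun b i => Real.log (w b i)) x i n) ≤ ‖opProd p x n‖ := by
  have h := (opProd p x n).le_opNorm (e i)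
  rw [opProd_apply e p w h1 h2, norm_smul, e.orthonormal.1, e.orthonormal.1, mul_one, mul_one] at h
  unfold bSum
  rw [Real.exp_sum]
  simp only [Real.exp_log (hw _ _)]
  exact (le_abs_self _).trans h

lemma norm_opProd_le (e : HilbertBasis ℤ ℝ H) (p : (H →L[ℝ] H) × (H →L[ℝ] H)) (w : Bool → ℤ → ℝ)
    (h1 : ∀ i : ℤ, p.1 (e i) = w false i • e (i + 1))
    (h2 : ∀ i : ℤ, p.2 (e i) = w true i • e (i + 1)) (hw : ∀ b i, 0 < w b i)
    (x : Sig) (n : ℕ) (M : ℝ)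
    (hM : ∀ i, bSum (fun b i => Real.log (w b i)) x i n ≤ M) :
    ‖opProd p x n‖ ≤ Real.exp M := by
  refine opNorm_le_of_weights e _ _ n _ (opProd_apply e p w h1 h2 x n) (Real.exp_nonneg _) ?_
  intro i
  rw [abs_of_pos (Finset.prod_pos (fun k _ => hw _ _))]
  have := Real.exp_le_exp.2 (hM i)
  unfold bSum at this
  rw [Real.exp_sum] at this
  simpa only [Real.exp_log (hw _ _)] using this

lemma weight_close (e : HilbertBasis ℤ ℝ H) (T T' : H →L[ℝ] H) (a a' : ℝ) (i : ℤ)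
    (h : T (e i) = a • e (i + 1)) (h' : T' (e i) = a' • e (i + 1)) (hd : ‖T - T'‖ < 1) :
    |a - a'| < 1 := by
  have h1 := (T - T').le_opNorm (e i)
  rw [ContinuousLinearMap.sub_apply, h, h', ← sub_smul, norm_smul, e.orthonormal.1,
    e.orthonormal.1, mul_one, mul_one] at h1
  exact lt_of_le_of_lt h1 hd

/-- Let `μ` be a shift-invariant Borel probability measure on `Σ₂` whose support is
uniquely ergodic (the restriction of the shift to `supp μ` admits exactly one invariant
Borel probability measure, necessarily `μ` itself).  Then there is a nonempty open subset
`U` of the space `W` of pairs of bounded invertible weighted shift operators with positive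
coefficients such that every pair in `U` has `μ` as its unique maximising measure. -/
theorem exists_open_set_unique_maximising
    (e : HilbertBasis ℤ ℝ H)
    (μ : Measure Sig) (hprob : IsProbabilityMeasure μ) (hinv : μ.map shift = μ)
    (hsupp : μ (suppM μ) = 1)
    (huniq : ∀ ν : Measure Sig, IsProbabilityMeasure ν → ν.map shift = ν →
      ν (suppM μ) = 1 → ν = μ) :
    ∃ U : Set (WSet e), IsOpen U ∧ U.Nonempty ∧
      ∀ p : WSet e, p ∈ U →
        ∀ ν : Measure Sig, IsProbabilityMeasure ν → ν.map shift = ν →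
          (LamOp (p : (H →L[ℝ] H) × (H →L[ℝ] H)) ν
              = logSprOp (p : (H →L[ℝ] H) × (H →L[ℝ] H)) ↔ ν = μ) := by
  classical
  have hK := isClosed_suppM μ
  have hinvK := suppM_inv μ hinv
  have hne : (suppM μ).Nonempty := by
    by_contra h
    rw [Set.not_nonempty_iff_eq_empty] at h
    rw [h] at hsupp
    simp at hsupp
  obtain ⟨Y, hY, hYd⟩ := exists_seq (suppM μ) hne
  choose T hT1 hT2 using fun b : Bool =>
    exists_weighted e {z : ℤ | goodP z ∧ b = uWord Y z}
  let w0 : Bool → ℤ → ℝ := fun b z => if goodP z ∧ b = uWord Y z then 8 else 1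
  have hT : ∀ b i, T b (e i) = w0 b i • e (i + 1) := by
    intro b i
    by_cases h : goodP i ∧ b = uWord Y i
    · simp only [w0, if_pos h]; exact hT1 b i h
    · simp only [w0, if_neg h]; exact hT2 b i h
  have hw0 : ∀ b i, 1 ≤ w0 b i := by
    intro b i
    simp only [w0]
    split_ifs <;> norm_num
  have hp0 : (T false, T true) ∈ WSet e :=
    ⟨w0 false, w0 true, ⟨1, one_pos, hw0 false⟩, ⟨1, one_pos, hw0 true⟩, hT false, hT true⟩
  refine ⟨Metric.ball ⟨(T false, T true), hp0⟩ 1, Metric.isOpen_ball,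
    ⟨_, Metric.mem_ball_self one_pos⟩, ?_⟩
  rintro ⟨p, hp⟩ hpU ν hν hνinv
  have hdist : dist p (T false, T true) < 1 := hpU
  rw [Prod.dist_eq, max_lt_iff, dist_eq_norm, dist_eq_norm] at hdist
  obtain ⟨α, β, ⟨c1, hc1, hα⟩, ⟨c2, hc2, hβ⟩, h1, h2⟩ := hp
  let w : Bool → ℤ → ℝ := fun b i => if b then β i else α i
  have hw1 : ∀ i : ℤ, p.1 (e i) = w false i • e (i + 1) := by simpa [w] using h1
  have hw2 : ∀ i : ℤ, p.2 (e i) = w true i • e (i + 1) := by simpa [w] using h2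
  have hclose : ∀ b i, |w b i - w0 b i| < 1 := by
    intro b i
    cases b
    · exact weight_close e _ _ _ _ i (hw1 i) (hT false i) hdist.1
    · exact weight_close e _ _ _ _ i (hw2 i) (hT true i) hdist.2
  have hc : 0 < min c1 c2 := lt_min hc1 hc2
  have hwc : ∀ b i, min c1 c2 ≤ w b i := by
    intro b i
    cases b
    · exact (min_le_left _ _).trans (by simpa [w] using hα i)
    · exact (min_le_right _ _).trans (by simpa [w] using hβ i)
  have hwpos : ∀ b i, 0 < w b i := fun b i => hc.trans_le (hwc b i)
  have hw9 : ∀ b i, w b i ≤ 9 := by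
    intro b i
    have h3 := abs_lt.1 (hclose b i)
    have h4 : w0 b i ≤ 8 := by simp only [w0]; split_ifs <;> norm_num
    linarith
  have hmax : ∀ b i, Real.log (w b i) ≤ Real.log 9 := fun b i =>
    Real.log_le_log (hwpos b i) (hw9 b i)
  have hnpos : ∀ x n, 0 < ‖opProd p x n‖ := fun x n =>
    (Real.exp_pos _).trans_le (norm_opProd_ge e p w hw1 hw2 hwpos x n 0)
  refine abstract_main (suppM μ) hK hinvK μ hprob hsupp huniq Y hY hYd
    (fun b i => Real.log (w b i)) (max (Real.log 9) (-Real.log (min c1 c2))) ?_ ?_ hmax ?_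
    (fun n x => Real.log ‖opProd p x n‖) ?_ ?_ ?_ ν hν hνinv
  · intro b i
    rw [abs_le]
    have h3 := Real.log_le_log hc (hwc b i)
    have h4 := le_max_right (Real.log 9) (-Real.log (min c1 c2))
    exact ⟨by linarith, (hmax b i).trans (le_max_left _ _)⟩
  · intro z hz
    refine Real.log_le_log (by norm_num) ?_
    have h3 := abs_lt.1 (hclose (uWord Y z) z)
    have h4 : w0 (uWord Y z) z = 8 := if_pos ⟨hz, rfl⟩
    linarith
  · intro b z hz
    refine Real.log_le_log (hwpos b z) ?_
    have h3 := abs_lt.1 (hclose b z)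
    have h4 : w0 b z = 1 := if_neg hz
    linarith
  · intro n
    refine continuous_of_fin n _ (fun x x' h => ?_)
    simp only [opProd_congr p x x' n h]
  · intro n x i
    exact (Real.le_log_iff_exp_le (hnpos x n)).2 (norm_opProd_ge e p w hw1 hw2 hwpos x n i)
  · intro n x M hM
    exact (Real.log_le_iff_le_exp (hnpos x n)).2 (norm_opProd_le e p w hw1 hw2 hwpos x n M hM)
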